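/- arXiv:2203.05101 — 2 statements merged into one kernel-verified Lean document; each statement's English description precedes it below -/
import Mathlib

section
/- Let A be a finite-dimensional associative unital normed algebra over ℝ and let n ≥ 1. In the product space V := Fin n → A (with the product topology), the set of good points V^• := { u : Fin n → A | ∃ v : Fin n → A, Σ_i u i * v i = 1 } is open and dense in V. -/
theorem finite_spectrum_aux (A : Type*) [Ring A] [Algebra ℝ A] [FiniteDimensional ℝ A] (a : A) :
    (spectrum ℝ a).Finite := by
  have hint : IsIntegral ℝ a := Algebra.IsIntegral.isIntegral a
  refine Set.Finite.subset ((minpoly ℝ a).rootSet_finite ℝ) ?_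
  intro t ht
  rw [Polynomial.mem_rootSet]
  refine ⟨minpoly.ne_zero hint, ?_⟩
  have h := spectrum.subset_polynomial_aeval a (minpoly ℝ a) ⟨t, ht, rfl⟩
  rw [minpoly.aeval] at h
  have hA : Nontrivial A := by
    by_contra hc
    rw [not_nontrivial_iff_subsingleton] at hc
    exact ht (isUnit_of_subsingleton _)
  rw [spectrum.zero_eq] at h
  simpa [Polynomial.aeval_def] using h

/-- The set of good points of `A^n` is open and dense. -/
theorem goodPoints_isOpen_and_dense
    (A : Type*) [NormedRing A] [NormedAlgebra ℝ A] [FiniteDimensional ℝ A]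
    (n : ℕ) (hn : 1 ≤ n) :
    IsOpen {u : Fin n → A | ∃ v : Fin n → A, ∑ i, u i * v i = 1} ∧
    Dense {u : Fin n → A | ∃ v : Fin n → A, ∑ i, u i * v i = 1} := by
  have : CompleteSpace A := FiniteDimensional.complete ℝ A
  constructor
  · rw [isOpen_iff_mem_nhds]
    rintro u ⟨v, hv⟩
    have hc : Continuous fun u : Fin n → A => ∑ i, u i * v i := by fun_prop
    have ho : IsOpen {u : Fin n → A | IsUnit (∑ i, u i * v i)} :=
      (Units.isOpen (R := A)).preimage hc
    refine Filter.mem_of_superset (ho.mem_nhds (by simp [hv])) ?_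
    rintro w ⟨c, hcw⟩
    refine ⟨fun i => v i * (c⁻¹ : Aˣ), ?_⟩
    simp_rw [← mul_assoc]
    rw [← Finset.sum_mul, ← hcw, Units.mul_inv]
  · intro u
    let i0 : Fin n := ⟨0, hn⟩
    let f : ℝ → Fin n → A := fun t => Function.update u i0 (u i0 - algebraMap ℝ A t)
    have hf : Continuous f := by
      refine continuous_const.update i0 (continuous_const.sub (continuous_algebraMap ℝ A))
    have h0 : f 0 = u := by simp [f]
    have hd : Dense (spectrum ℝ (u i0))ᶜ := (finite_spectrum_aux A (u i0)).countable.dense_compl ℝ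
    rw [← h0]
    refine map_mem_closure hf (hd 0) ?_
    intro t ht
    have hu : IsUnit (u i0 - algebraMap ℝ A t) := by
      rw [← IsUnit.neg_iff, neg_sub]
      exact spectrum.notMem_iff.1 ht
    obtain ⟨c, hc⟩ := hu
    refine ⟨Pi.single i0 (c⁻¹ : Aˣ), ?_⟩
    rw [Finset.sum_eq_single i0]
    · simp [f, ← hc]
    · intro j _ hj
      simp [hj]
    · simp
end

section
/- Let D := DualNumber ℝ be the dual numbers with conjugation σ(a + bε) = a − bε, V a finite free left D-module, and B a non-degenerate σ-Hermitian form on V. Let b : Fin m → V be an orthonormal family whose D-span is a proper submodule of V (span D (range b) ≠ ⊤). Then there exists u ∈ V with B(u, u) ≠ 0 and B(b i, u) = 0 for every i. -/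
/-- The conjugation `a + bε ↦ a - bε` of the dual numbers. -/
def dualConj (d : DualNumber ℝ) : DualNumber ℝ :=
  TrivSqZeroExt.inl (TrivSqZeroExt.fst d) - TrivSqZeroExt.inr (TrivSqZeroExt.snd d)

/-- Given a non-degenerate Hermitian form on a finite free module over the dual
numbers and an orthonormal family spanning a proper submodule, there is a
nonnull vector orthogonal to the family. -/
theorem exists_orthogonal_nonnull_dualNumber
    (V : Type*) [AddCommGroup V] [Module (DualNumber ℝ) V]
    [Module.Finite (DualNumber ℝ) V] [Module.Free (DualNumber ℝ) V]
    (B : V → V → DualNumber ℝ)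
    (hadd : ∀ u v w : V, B (u + v) w = B u w + B v w)
    (hsmul : ∀ (z : DualNumber ℝ) (u v : V), B (z • u) v = z * B u v)
    (hconj : ∀ u v : V, dualConj (B u v) = B v u)
    (hnd : ∀ u : V, (∀ v : V, B u v = 0) → u = 0)
    (m : ℕ) (b : Fin m → V)
    (hnorm : ∀ i, B (b i) (b i) = 1 ∨ B (b i) (b i) = -1)
    (horth : ∀ i j, i ≠ j → B (b i) (b j) = 0)
    (hspan : Submodule.span (DualNumber ℝ) (Set.range b) ≠ ⊤) :
    ∃ u : V, B u u ≠ 0 ∧ ∀ i, B (b i) u = 0 := by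
  classical
  have conj0 : dualConj 0 = 0 := by ext <;> simp [dualConj]
  by_contra hcon
  push Not at hcon
  let L : V → V →ₗ[DualNumber ℝ] DualNumber ℝ := fun w =>
    { toFun := fun u => B u w
      map_add' := fun u v => hadd u v w
      map_smul' := fun z u => hsmul z u w }
  have hL : ∀ u w, L w u = B u w := fun _ _ => rfl
  have hadd2 : ∀ u v w : V, B u (v + w) = B u v + B u w := by
    intro u v w
    rw [← hconj (v + w) u, ← hconj v u, ← hconj w u, hadd]
    ext <;> simp [dualConj] <;> ring
  have hsmul2 : ∀ (z : DualNumber ℝ) (u v : V), B u (z • v) = dualConj z * B u v := by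
    intro z u v
    rw [← hconj (z • v) u, ← hconj v u, hsmul]
    ext <;> simp [dualConj] <;> ring
  have hsym0 : ∀ u v, B u v = 0 → B v u = 0 := by
    intro u v h
    rw [← hconj u v, h, conj0]
  let P : V →ₗ[DualNumber ℝ] V :=
    LinearMap.id - ∑ i, ((B (b i) (b i)) • (L (b i))).smulRight (b i)
  have hP : ∀ v, P v = v - ∑ i, (B (b i) (b i) * B v (b i)) • b i := by
    intro v
    simp [P, hL]
  have hsq : ∀ i, B (b i) (b i) * B (b i) (b i) = 1 := by
    intro i
    rcases hnorm i with h | h <;> rw [h] <;> ring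
  have hPW : ∀ v j, B (P v) (b j) = 0 := by
    intro v j
    rw [← hL, hP, map_sub, map_sum, Finset.sum_eq_single j]
    · rw [map_smul, hL, hL, smul_eq_mul]
      linear_combination (- B v (b j)) * hsq j
    · intro i _ hij
      rw [map_smul, hL, horth i j hij, smul_zero]
    · simp
  have hPid : ∀ v, (∀ j, B v (b j) = 0) → P v = v := by
    intro v hv
    rw [hP]
    simp [hv]
  have hnull : ∀ u, (∀ j, B u (b j) = 0) → B u u = 0 := by
    intro u hu
    by_contra hne
    obtain ⟨i, hi⟩ := hcon u hne
    exact hi (hsym0 _ _ (hu i))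
  have hfst : ∀ u w, (∀ j, B u (b j) = 0) → (∀ j, B w (b j) = 0) →
      TrivSqZeroExt.fst (B u w) = 0 := by
    intro u w hu hw
    have h := hnull (u + w) (fun j => by rw [hadd, hu, hw, add_zero])
    rw [hadd, hadd2, hadd2, hnull u hu, hnull w hw, ← hconj u w] at h
    have h2 := congrArg TrivSqZeroExt.fst h
    simp [dualConj] at h2
    linarith
  have heps : ∀ u, (∀ j, B u (b j) = 0) → (DualNumber.eps : DualNumber ℝ) • u = 0 := by
    intro u hu
    apply hnd
    intro v
    have hv : v = P v + ∑ i, (B (b i) (b i) * B v (b i)) • b i := by rw [hP]; abel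
    have hsum : B (∑ i, (B (b i) (b i) * B v (b i)) • b i) u = 0 := by
      rw [← hL, map_sum]
      apply Finset.sum_eq_zero
      intro i _
      rw [map_smul, hL, hsym0 _ _ (hu i), smul_zero]
    rw [hsmul, hv, hadd2, hsym0 _ _ hsum, add_zero]
    have := hfst u (P v) hu (hPW v)
    ext <;> simp [this]
  have hzero : ∀ u, (∀ j, B u (b j) = 0) → u = 0 := by
    intro u hu
    have h0 := heps u hu
    let e := Module.Free.chooseBasis (DualNumber ℝ) V
    have hc : ∀ i, TrivSqZeroExt.fst (e.repr u i) = 0 := by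
      intro i
      have h1 : e.repr ((DualNumber.eps : DualNumber ℝ) • u) i = 0 := by rw [h0]; simp
      rw [map_smul, Finsupp.smul_apply, smul_eq_mul] at h1
      simpa using congrArg TrivSqZeroExt.snd h1
    have hu2 : u = (DualNumber.eps : DualNumber ℝ) •
        ∑ i, (TrivSqZeroExt.inl (TrivSqZeroExt.snd (e.repr u i)) : DualNumber ℝ) • e i := by
      conv_lhs => rw [← e.sum_repr u]
      rw [Finset.smul_sum]
      refine Finset.sum_congr rfl fun i _ => ?_
      rw [smul_smul]
      congr 1
      ext <;> simp [hc]
    rw [← hPid u hu, hu2, map_smul]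
    exact heps _ (hPW _)
  apply hspan
  rw [eq_top_iff]
  intro v _
  have h := hzero (P v) (hPW v)
  rw [hP, sub_eq_zero] at h
  rw [h]
  exact Submodule.sum_mem _ fun i _ =>
    Submodule.smul_mem _ _ (Submodule.subset_span ⟨i, rfl⟩)
end
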